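/- Let k ≥ 0 and suppose (ūᵏ, v̄ᵏ, λ̄ᵏ) ∈ dom g × dom h × ℝⁿ and v̂ᵏ ∈ dom h, and the next iterate is generated by: λ*_k := (1/β_k)(c − Aūᵏ − Bv̄ᵏ); λ̂ᵏ := (1−τ_k)λ̄ᵏ + τ_kλ*_k; ûᵏ⁺¹ minimizes u ↦ g(u) − ⟨Aᵀλ̂ᵏ, u⟩ + (ρ_k/2)‖Au + Bv̂ᵏ − c‖² + γ_{k+1} b(u, ū_c); v̂ᵏ⁺¹ minimizes v ↦ h(v) − ⟨Bᵀλ̂ᵏ, v⟩ + (η_k/2)‖Aûᵏ⁺¹ + Bv − c‖²; λ̄ᵏ⁺¹ := λ̂ᵏ − η_k(Aûᵏ⁺¹ + Bv̂ᵏ⁺¹ − c); (ūᵏ⁺¹, v̄ᵏ⁺¹) := (1−τ_k)(ūᵏ, v̄ᵏ) + τ_k(ûᵏ⁺¹, v̂ᵏ⁺¹). If τ_k ∈ (0,1) and γ_k, γ_{k+1}, β_k, β_{k+1}, ρ_k, η_k > 0 satisfy (1−τ_k)(1+2τ_k)η_kβ_k ≥ 2τ_k², γ_{k+1} ≥ ((3−2τ_k)/(3−(2−L_b⁻¹)τ_k))·γ_k,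 β_{k+1} ≥ (1−τ_k)β_k, and γ_{k+1} ≥ ‖A‖²(η_k + ρ_k/τ_k), then G_{γ_{k+1},β_{k+1}}(w̄ᵏ⁺¹) ≤ (1−τ_k)·G_{γ_k,β_k}(w̄ᵏ) + ( τ_k²η_k/4 + τ_kρ_k/2 )·D_f², where w̄ᵏ = (ūᵏ, v̄ᵏ, λ̄ᵏ). -/

import Mathlib

open scoped RealInnerProductSpace

noncomputable section

/-- Bregman distance generated by `ω` with gradient `ω'`. -/
noncomputable def breg {p : ℕ} (ω : EuclideanSpace ℝ (Fin p) → ℝ)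
    (ω' : EuclideanSpace ℝ (Fin p) → EuclideanSpace ℝ (Fin p))
    (u uh : EuclideanSpace ℝ (Fin p)) : ℝ :=
  ω u - ω uh - ⟪ω' uh, u - uh⟫

/-!
Put `r̄ = Aū + Bv̄ - c`, `r̂ = Aû + Bv̂ - c`, `λ⁺ = λ̂ - η r̂`, and let `d`, `d⁺` be the
old and new smoothed duals.

* First-order optimality of the two subproblems: `Bᵀλ⁺` is a subgradient of `h` at `v̂`, and
  `g + γ⁺ b` lies above an affine function of slope `Aᵀ(λ̂ - ρ (Aû + Bv̂ᵏ - c))` by at least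
  `γ⁺/2 ‖u - û‖²`. The defect between that slope and `Aᵀλ⁺` is absorbed by the quadratic term
  through Young's inequality, so
  `d⁺(λ⁺) ≤ ⟪λ⁺, r̂⟫ - g û - γ⁺ b û - h v̂ + η/2 ‖r̂‖² + τρ/2 ‖Aû + Bv̂ᵏ - c‖²`.
* Weak duality at the old multiplier: `⟪λ̄, r̂⟫ - g û - γ b û - h v̂ ≤ d(λ̄)`.
* Convexity of `g` and `h`, and `λ* = -β⁻¹ r̄`, bound the new penalized objective by `(1 - τ)` times
  the old one plus `τ (g û + h v̂ - ⟪λ*, r̂⟫)` and a multiple of `‖r̂‖²`.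

As `λ⁺ = (1 - τ) λ̄ + τ λ* - η r̂`, all inner products cancel in the sum of these bounds, and the
coefficient of `‖r̂‖²` that remains is at most `τ² η / 4`.
-/

section Convexity

variable {E : Type*} [NormedAddCommGroup E] [NormedSpace ℝ E] {s : Set E} {φ : ℝ → ℝ}
  {f ψ : E → ℝ} {x y : E}

lemma add_le_add_of_isMinOn_add_of_hasLineDerivAt {d : ℝ} (hf : UniformConvexOn s φ f)
    (hx : x ∈ s) (hy : y ∈ s) (hmin : IsMinOn (fun z => f z + ψ z) s x)
    (hψ : HasLineDerivAt ℝ ψ d x (y - x)) : f x + φ ‖x - y‖ ≤ f y + d := by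
  have slope_ge : ∀ t ∈ Set.Ioo (0 : ℝ) 1,
      f x - f y + (1 - t) * φ ‖x - y‖ ≤ t⁻¹ • (ψ (x + t • (y - x)) - ψ x) := by
    rintro t ⟨ht₀, ht₁⟩
    have hz : (1 - t) • x + t • y = x + t • (y - x) := by module
    have hconv := hf.2 hx hy (sub_nonneg.2 ht₁.le) ht₀.le (sub_add_cancel 1 t)
    have hle := hmin (hf.1 hx hy (sub_nonneg.2 ht₁.le) ht₀.le (sub_add_cancel 1 t))
    simp only [hz, Set.mem_ofPred_eq, smul_eq_mul] at hconv hle ⊢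
    rw [le_inv_mul_iff₀ ht₀]
    linarith
  have lhs_tendsto : Filter.Tendsto (fun t : ℝ => f x - f y + (1 - t) * φ ‖x - y‖)
      (nhdsWithin 0 (Set.Ioi 0)) (nhds (f x - f y + (1 - 0) * φ ‖x - y‖)) :=
    (Continuous.tendsto (by fun_prop) 0).mono_left nhdsWithin_le_nhds
  have hlim := le_of_tendsto_of_tendsto lhs_tendsto hψ.tendsto_slope_zero_right
    (Filter.eventually_of_mem (Ioo_mem_nhdsGT one_pos) slope_ge)
  linarith

lemma strongConvexOn_add_const_mul {g b : E → ℝ} {m γ : ℝ} (hg : ConvexOn ℝ s g)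
    (hb : StrongConvexOn s m b) (hγ : 0 ≤ γ) :
    StrongConvexOn s (γ * m) (fun u => g u + γ * b u) := by
  refine ⟨hg.1, fun x hx y hy α α' hα hα' hsum => ?_⟩
  have hgxy := hg.2 hx hy hα hα' hsum
  have hbxy := mul_le_mul_of_nonneg_left (hb.2 hx hy hα hα' hsum) hγ
  simp only [smul_eq_mul] at hgxy hbxy ⊢
  linarith

end Convexity

section Gradient

variable {E : Type*} [NormedAddCommGroup E] [InnerProductSpace ℝ E] [CompleteSpace E]
  {s : Set E} {f : E → ℝ} {f' : E → E} {m : ℝ} {x y : E}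

lemma add_inner_gradient_add_sq_le_of_strongConvexOn {v : E} (hf : StrongConvexOn s m f)
    (hx : x ∈ s) (hy : y ∈ s) (hv : HasGradientAt f v x) :
    f x + ⟪v, y - x⟫ + m / 2 * ‖y - x‖ ^ 2 ≤ f y := by
  have hψ : HasLineDerivAt ℝ (fun z => -f z) (-⟪v, y - x⟫) x (y - x) :=
    hv.hasFDerivAt.neg.hasLineDerivAt (y - x)
  -- Every point minimizes `f + (-f) = 0`.
  have h := add_le_add_of_isMinOn_add_of_hasLineDerivAt hf hx hy (fun z _ => by simp) hψ
  rw [norm_sub_rev] at h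
  linarith

lemma mul_sq_le_inner_gradient_sub_of_strongConvexOn (hf : StrongConvexOn s m f)
    (hx : x ∈ s) (hy : y ∈ s) (hgx : HasGradientAt f (f' x) x) (hgy : HasGradientAt f (f' y) y) :
    m * ‖y - x‖ ^ 2 ≤ ⟪f' y - f' x, y - x⟫ := by
  have hxy := add_inner_gradient_add_sq_le_of_strongConvexOn hf hx hy hgx
  have hyx := add_inner_gradient_add_sq_le_of_strongConvexOn hf hy hx hgy
  rw [norm_sub_rev x y, ← neg_sub y x, inner_neg_right] at hyx
  rw [inner_sub_left]
  linarith

lemma le_lipschitzConst_of_strongConvexOn {K : NNReal} (hf : StrongConvexOn s m f)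
    (hgrad : ∀ z ∈ s, HasGradientAt f (f' z) z) (hlip : LipschitzOnWith K f' s)
    (hs : s.Nontrivial) : m ≤ K := by
  obtain ⟨x, hx, y, hy, hne⟩ := hs
  have hpos : 0 < ‖y - x‖ ^ 2 := by
    have := norm_sub_pos_iff.2 hne.symm
    positivity
  refine le_of_mul_le_mul_right ?_ hpos
  calc m * ‖y - x‖ ^ 2 ≤ ⟪f' y - f' x, y - x⟫ :=
        mul_sq_le_inner_gradient_sub_of_strongConvexOn hf hx hy (hgrad x hx) (hgrad y hy)
    _ ≤ ‖f' y - f' x‖ * ‖y - x‖ := real_inner_le_norm _ _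
    _ ≤ K * ‖y - x‖ * ‖y - x‖ := by gcongr; exact hlip.norm_sub_le hy hx
    _ = K * ‖y - x‖ ^ 2 := by ring

end Gradient

section Parameters

lemma one_sub_le_smoothing_ratio {τ L : ℝ} (hτ₀ : 0 ≤ τ) (hτ₁ : τ < 1) (hL : 1 ≤ L) :
    1 - τ ≤ (3 - 2 * τ) / (3 - (2 - L⁻¹) * τ) := by
  have hLinv₀ : 0 ≤ L⁻¹ := by positivity
  have hLinv₁ : L⁻¹ ≤ 1 := inv_le_one_of_one_le₀ hL
  have hden : 0 < 3 - (2 - L⁻¹) * τ := by nlinarith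
  rw [le_div_iff₀ hden]
  nlinarith [mul_nonneg hτ₀ (sub_nonneg.2 hτ₁.le), mul_nonneg hτ₀ hLinv₀]

lemma residual_coeff_le {τ β η : ℝ} (hτ : τ < 1) (hβ : 0 < β) (hη : 0 ≤ η)
    (hηβ : 2 * τ ^ 2 ≤ (1 - τ) * (1 + 2 * τ) * η * β) :
    τ ^ 2 / (2 * ((1 - τ) * β)) - η / 2 ≤ τ ^ 2 * η / 4 := by
  have : 0 < 1 - τ := sub_pos.2 hτ
  have hdiv : τ ^ 2 / (2 * ((1 - τ) * β)) ≤ (1 + 2 * τ) * η / 4 := by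
    rw [div_le_iff₀ (by positivity)]
    linarith
  have hsq : 0 ≤ η * (1 - τ) ^ 2 := by positivity
  linarith

end Parameters

section Penalty

variable {E E₁ E₂ F : Type*}
  [NormedAddCommGroup E] [NormedSpace ℝ E]
  [NormedAddCommGroup E₁] [NormedSpace ℝ E₁]
  [NormedAddCommGroup E₂] [NormedSpace ℝ E₂]
  [NormedAddCommGroup F] [InnerProductSpace ℝ F]

lemma norm_smul_add_smul_sq_real (a b : ℝ) (x y : F) :
    ‖a • x + b • y‖ ^ 2 = a ^ 2 * ‖x‖ ^ 2 + 2 * (a * b) * ⟪x, y⟫ + b ^ 2 * ‖y‖ ^ 2 := by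
  rw [norm_add_sq_real, norm_smul, norm_smul, real_inner_smul_left, real_inner_smul_right,
    mul_pow, mul_pow, Real.norm_eq_abs, Real.norm_eq_abs, sq_abs, sq_abs]
  ring

/-- The objective of `min g u + h v` subject to `A u + B v = c`, with the constraint replaced by a
quadratic penalty of parameter `1 / β`; this is `f_β`. -/
def penalizedObjective (g : E₁ → ℝ) (h : E₂ → ℝ) (A : E₁ →L[ℝ] F) (B : E₂ →L[ℝ] F) (c : F)
    (β : ℝ) (u : E₁) (v : E₂) : ℝ :=
  g u + h v + 1 / (2 * β) * ‖A u + B v - c‖ ^ 2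

lemma penalizedObjective_convexCombination_le {s : Set E₁} {t : Set E₂} {g : E₁ → ℝ}
    {h : E₂ → ℝ} {A : E₁ →L[ℝ] F} {B : E₂ →L[ℝ] F} {c : F} (hg : ConvexOn ℝ s g)
    (hh : ConvexOn ℝ t h) {β βp τ : ℝ} (hβ : 0 < β) (hβp : (1 - τ) * β ≤ βp) (hτ₀ : 0 ≤ τ)
    (hτ₁ : τ < 1) {u u' : E₁} {v v' : E₂} (hu : u ∈ s) (hu' : u' ∈ s) (hv : v ∈ t)
    (hv' : v' ∈ t) :
    penalizedObjective g h A B c βp ((1 - τ) • u + τ • u') ((1 - τ) • v + τ • v')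
      ≤ (1 - τ) * penalizedObjective g h A B c β u v
        + τ * (g u' + h v' - ⟪β⁻¹ • (c - A u - B v), A u' + B v' - c⟫)
        + τ ^ 2 / (2 * ((1 - τ) * β)) * ‖A u' + B v' - c‖ ^ 2 := by
  have hτ : 0 < 1 - τ := sub_pos.2 hτ₁
  have hgu := hg.2 hu hu' hτ.le hτ₀ (sub_add_cancel 1 τ)
  have hhv := hh.2 hv hv' hτ.le hτ₀ (sub_add_cancel 1 τ)
  have hres : A ((1 - τ) • u + τ • u') + B ((1 - τ) • v + τ • v') - c
      = (1 - τ) • (A u + B v - c) + τ • (A u' + B v' - c) := by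
    simp only [map_add, map_smul]; module
  have hmult : β⁻¹ • (c - A u - B v) = -(β⁻¹ • (A u + B v - c)) := by module
  have hpen : 1 / (2 * βp) * ‖(1 - τ) • (A u + B v - c) + τ • (A u' + B v' - c)‖ ^ 2
      ≤ (1 - τ) * (1 / (2 * β) * ‖A u + B v - c‖ ^ 2)
        + τ * (β⁻¹ * ⟪A u + B v - c, A u' + B v' - c⟫)
        + τ ^ 2 / (2 * ((1 - τ) * β)) * ‖A u' + B v' - c‖ ^ 2 := by
    calc _ ≤ 1 / (2 * ((1 - τ) * β))
            * ‖(1 - τ) • (A u + B v - c) + τ • (A u' + B v' - c)‖ ^ 2 := by gcongr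
      _ = _ := by rw [norm_smul_add_smul_sq_real]; field_simp
  simp only [smul_eq_mul] at hgu hhv
  rw [penalizedObjective, penalizedObjective, hres, hmult, inner_neg_left, real_inner_smul_left]
  linarith

lemma two_mul_inner_le_mul_sq_add (x y : F) {ε : ℝ} (hε : 0 < ε) :
    2 * ⟪x, y⟫ ≤ ε * ‖x‖ ^ 2 + ε⁻¹ * ‖y‖ ^ 2 :=
  calc 2 * ⟪x, y⟫ ≤ 2 * (‖x‖ * ‖y‖) := by gcongr; exact real_inner_le_norm x y
    _ = 2 * ‖x‖ * ‖y‖ := by ring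
    _ ≤ ε * ‖x‖ ^ 2 + ε⁻¹ * ‖y‖ ^ 2 := two_mul_le_add_mul_sq hε

lemma inner_map_le_of_opNorm_sq_mul_le (A : E →L[ℝ] F) (d : E) (q r : F) {τ ρ η γ : ℝ}
    (hτ : 0 < τ) (hρ : 0 ≤ ρ) (hη : 0 ≤ η) (hγ : ‖A‖ ^ 2 * (η + ρ / τ) ≤ γ) :
    ⟪ρ • q - η • r, A d⟫
      ≤ γ / 2 * ‖d‖ ^ 2 + η / 2 * ‖r‖ ^ 2 + τ * ρ / 2 * ‖q‖ ^ 2 := by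
  have hq := mul_le_mul_of_nonneg_left (two_mul_inner_le_mul_sq_add q (A d) hτ) hρ
  have hr := mul_le_mul_of_nonneg_left (two_mul_inner_le_mul_sq_add (-r) (A d) one_pos) hη
  have hA : (η + ρ / τ) * ‖A d‖ ^ 2 ≤ γ * ‖d‖ ^ 2 :=
    calc (η + ρ / τ) * ‖A d‖ ^ 2 ≤ (η + ρ / τ) * (‖A‖ * ‖d‖) ^ 2 := by
          gcongr; exact A.le_opNorm d
      _ = ‖A‖ ^ 2 * (η + ρ / τ) * ‖d‖ ^ 2 := by ring
      _ ≤ γ * ‖d‖ ^ 2 := by gcongr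
  rw [inner_neg_left, norm_neg, inv_one] at hr
  rw [inner_sub_left, real_inner_smul_left, real_inner_smul_left]
  rw [add_mul, div_eq_mul_inv] at hA
  linarith

end Penalty

section Bregman

variable {p : ℕ} {s : Set (EuclideanSpace ℝ (Fin p))} {ω : EuclideanSpace ℝ (Fin p) → ℝ}
  {ω' : EuclideanSpace ℝ (Fin p) → EuclideanSpace ℝ (Fin p)} {m : ℝ}
  {u uc : EuclideanSpace ℝ (Fin p)}

lemma strongConvexOn_breg (hω : StrongConvexOn s m ω) :
    StrongConvexOn s m (fun u => breg ω ω' u uc) := by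
  refine ⟨hω.1, fun x hx y hy a b ha hb hab => ?_⟩
  have h := hω.2 hx hy ha hb hab
  obtain rfl := eq_sub_of_add_eq hab
  simp only [breg, inner_sub_right, inner_add_right, real_inner_smul_right, smul_eq_mul] at h ⊢
  linarith

lemma breg_nonneg (hω : StrongConvexOn s m ω) (hm : 0 ≤ m) (hgrad : HasGradientAt ω (ω' uc) uc)
    (huc : uc ∈ s) (hu : u ∈ s) : 0 ≤ breg ω ω' u uc := by
  have h := add_inner_gradient_add_sq_le_of_strongConvexOn hω huc hu hgrad
  have : 0 ≤ m / 2 * ‖u - uc‖ ^ 2 := by positivity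
  unfold breg
  linarith

-- When `L < 1` the lower bound on `γp / γ` may fall below `1 - τ`, but then `s` is a singleton.
lemma one_sub_mul_breg_le {L τ γ γp : ℝ} (hω : StrongConvexOn s 1 ω)
    (hgrad : ∀ z ∈ s, HasGradientAt ω (ω' z) z) (hL : 0 ≤ L)
    (hlip : LipschitzOnWith L.toNNReal ω' s) (hτ₀ : 0 ≤ τ) (hτ₁ : τ < 1) (hγ : 0 ≤ γ)
    (hγp : (3 - 2 * τ) / (3 - (2 - L⁻¹) * τ) * γ ≤ γp) (huc : uc ∈ s) (hu : u ∈ s) :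
    (1 - τ) * (γ * breg ω ω' u uc) ≤ γp * breg ω ω' u uc := by
  rcases s.subsingleton_or_nontrivial with hs | hs
  · simp [hs hu huc, breg]
  · have hL₁ : 1 ≤ L := by
      simpa only [Real.coe_toNNReal L hL] using le_lipschitzConst_of_strongConvexOn hω hgrad hlip hs
    have hb := breg_nonneg hω zero_le_one (hgrad uc huc) huc hu
    have hratio := one_sub_le_smoothing_ratio hτ₀ hτ₁ hL₁
    rw [← mul_assoc]
    gcongr
    exact (mul_le_mul_of_nonneg_right hratio hγ).trans hγp

end Bregman

section Hilbert

variable {E E₁ E₂ F : Type*}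
  [NormedAddCommGroup E] [InnerProductSpace ℝ E]
  [NormedAddCommGroup E₁] [InnerProductSpace ℝ E₁]
  [NormedAddCommGroup E₂] [InnerProductSpace ℝ E₂]
  [NormedAddCommGroup F] [InnerProductSpace ℝ F]

/-- `fstar` is the Fenchel conjugate of the extended-valued function that equals `f` on its
effective domain `s` and `+∞` elsewhere; that conjugate is required to be finite everywhere. -/
def IsFenchelConjugateOn (s : Set E) (f fstar : E → ℝ) : Prop :=
  ∀ z, IsLUB ((fun x => ⟪z, x⟫ - f x) '' s) (fstar z)

lemma isFenchelConjugateOn_of_forall_exists_eq {s : Set E} {f fstar : E → ℝ}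
    (h : ∀ z, ∃ x ∈ s, (∀ y ∈ s, ⟪z, y⟫ - f y ≤ ⟪z, x⟫ - f x) ∧ fstar z = ⟪z, x⟫ - f x) :
    IsFenchelConjugateOn s f fstar := by
  intro z
  obtain ⟨x, hx, hmax, heq⟩ := h z
  rw [heq]
  exact IsGreatest.isLUB ⟨Set.mem_image_of_mem _ hx, Set.forall_mem_image.2 hmax⟩

/-- The dual objective (to be minimized) built from conjugates `gstar` and `hstar`. It is the
smoothed dual `d_γ` when `gstar` is the smoothed conjugate `g*_γ`. -/
def dualObjective [CompleteSpace E₁] [CompleteSpace E₂] [CompleteSpace F]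
    (gstar : E₁ → ℝ) (hstar : E₂ → ℝ) (A : E₁ →L[ℝ] F) (B : E₂ →L[ℝ] F) (c lam : F) : ℝ :=
  gstar (A.adjoint lam) + hstar (B.adjoint lam) - ⟪c, lam⟫

section AugmentedLagrangian

variable [CompleteSpace E] [CompleteSpace F] {s : Set E} {φ : ℝ → ℝ} {f fstar : E → ℝ}
  {A : E →L[ℝ] F} {R : E → F} {lam : F} {ρ : ℝ} {x y : E}

-- `λ - ρ R x` is the multiplier that the augmented Lagrangian method updates to.
lemma add_inner_map_le_of_isMinOn_augmentedLagrangian (hf : UniformConvexOn s φ f) (hx : x ∈ s)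
    (hy : y ∈ s) (hR : HasFDerivAt R A x)
    (hmin : IsMinOn (fun z => f z - ⟪A.adjoint lam, z⟫ + ρ / 2 * ‖R z‖ ^ 2) s x) :
    f x + φ ‖x - y‖ + ⟪lam - ρ • R x, A (y - x)⟫ ≤ f y := by
  have hψ : HasLineDerivAt ℝ (fun z => -⟪A.adjoint lam, z⟫ + ρ / 2 * ‖R z‖ ^ 2)
      (-⟪lam - ρ • R x, A (y - x)⟫) x (y - x) := by
    have hlin : HasFDerivAt (fun z => ⟪A.adjoint lam, z⟫) (innerSL ℝ (A.adjoint lam)) x :=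
      (innerSL ℝ (A.adjoint lam)).hasFDerivAt
    convert (hlin.fun_neg.fun_add (hR.norm_sq.const_mul (ρ / 2))).hasLineDerivAt (y - x) using 1
    simp only [map_sub, inner_sub_left, inner_sub_right, real_inner_smul_left, add_apply, neg_apply,
      coe_innerSL_apply, ContinuousLinearMap.adjoint_inner_left, smul_apply,
      ContinuousLinearMap.comp_apply, nsmul_eq_mul, Nat.cast_ofNat, smul_eq_mul]
    ring
  have h := add_le_add_of_isMinOn_add_of_hasLineDerivAt hf hx hy
    (by simpa only [sub_eq_add_neg, add_assoc] using hmin) hψ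
  linarith

lemma fenchelConjugate_le_of_isMinOn_augmentedLagrangian (hf : ConvexOn ℝ s f)
    (hstar : IsFenchelConjugateOn s f fstar) (hx : x ∈ s) (hR : HasFDerivAt R A x)
    (hmin : IsMinOn (fun z => f z - ⟪A.adjoint lam, z⟫ + ρ / 2 * ‖R z‖ ^ 2) s x) :
    fstar (A.adjoint (lam - ρ • R x)) ≤ ⟪lam - ρ • R x, A x⟫ - f x := by
  refine (hstar _).2 (Set.forall_mem_image.2 fun y hy => ?_)
  have h := add_inner_map_le_of_isMinOn_augmentedLagrangian hf.uniformConvexOn_zero hx hy hR hmin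
  rw [Pi.zero_apply, map_sub, inner_sub_right] at h
  rw [ContinuousLinearMap.adjoint_inner_left]
  linarith

/-- Here the multiplier is updated with a vector `r` other than `R x`; strong convexity of `f` pays
for the discrepancy. -/
lemma fenchelConjugate_le_of_isMinOn_augmentedLagrangian_of_strongConvexOn {γ η τ : ℝ} (r : F)
    (hf : StrongConvexOn s γ f) (hstar : IsFenchelConjugateOn s f fstar) (hx : x ∈ s)
    (hR : HasFDerivAt R A x) (hτ : 0 < τ) (hρ : 0 ≤ ρ) (hη : 0 ≤ η)
    (hγ : ‖A‖ ^ 2 * (η + ρ / τ) ≤ γ)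
    (hmin : IsMinOn (fun z => f z - ⟪A.adjoint lam, z⟫ + ρ / 2 * ‖R z‖ ^ 2) s x) :
    fstar (A.adjoint (lam - η • r))
      ≤ ⟪lam - η • r, A x⟫ - f x + η / 2 * ‖r‖ ^ 2 + τ * ρ / 2 * ‖R x‖ ^ 2 := by
  refine (hstar _).2 (Set.forall_mem_image.2 fun y hy => ?_)
  have hopt := add_inner_map_le_of_isMinOn_augmentedLagrangian hf hx hy hR hmin
  have hyoung := inner_map_le_of_opNorm_sq_mul_le A (y - x) (R x) r hτ hρ hη hγ
  have hslope : ⟪lam - η • r, A y⟫ = ⟪lam - η • r, A x⟫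
      + ⟪lam - ρ • R x, A (y - x)⟫ + ⟪ρ • R x - η • r, A (y - x)⟫ := by
    rw [add_assoc, ← inner_add_left, sub_add_sub_cancel, ← inner_add_right, ← map_add,
      add_sub_cancel]
  rw [norm_sub_rev] at hopt
  rw [ContinuousLinearMap.adjoint_inner_left, hslope]
  linarith

end AugmentedLagrangian

section Dual

variable [CompleteSpace E₁] [CompleteSpace E₂] [CompleteSpace F] {s : Set E₁} {t : Set E₂}
  {f fstar : E₁ → ℝ} {h hstar : E₂ → ℝ} {A : E₁ →L[ℝ] F} {B : E₂ →L[ℝ] F} {c : F}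
  {u : E₁} {v : E₂}

lemma inner_residual_sub_le_dualObjective (hf : IsFenchelConjugateOn s f fstar)
    (hh : IsFenchelConjugateOn t h hstar) (hu : u ∈ s) (hv : v ∈ t) (lam : F) :
    ⟪lam, A u + B v - c⟫ - f u - h v ≤ dualObjective fstar hstar A B c lam := by
  have hfu := (hf (A.adjoint lam)).1 (Set.mem_image_of_mem _ hu)
  have hhv := (hh (B.adjoint lam)).1 (Set.mem_image_of_mem _ hv)
  simp only [ContinuousLinearMap.adjoint_inner_left] at hfu hhv
  rw [dualObjective, inner_sub_right, inner_add_right, real_inner_comm lam c]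
  linarith

lemma dualObjective_le_of_isMinOn_augmentedLagrangian {γ η ρ τ : ℝ} {w : E₂} {lam : F}
    (hf : StrongConvexOn s γ f) (hh : ConvexOn ℝ t h) (hfstar : IsFenchelConjugateOn s f fstar)
    (hhstar : IsFenchelConjugateOn t h hstar) (hτ : 0 < τ) (hρ : 0 ≤ ρ) (hη : 0 ≤ η)
    (hγ : ‖A‖ ^ 2 * (η + ρ / τ) ≤ γ) (hu : u ∈ s)
    (humin : IsMinOn (fun x => f x - ⟪A.adjoint lam, x⟫ + ρ / 2 * ‖A x + B w - c‖ ^ 2) s u)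
    (hv : v ∈ t)
    (hvmin : IsMinOn (fun y => h y - ⟪B.adjoint lam, y⟫ + η / 2 * ‖A u + B y - c‖ ^ 2) t v) :
    dualObjective fstar hstar A B c (lam - η • (A u + B v - c))
      ≤ ⟪lam - η • (A u + B v - c), A u + B v - c⟫ - f u - h v
        + η / 2 * ‖A u + B v - c‖ ^ 2 + τ * ρ / 2 * ‖A u + B w - c‖ ^ 2 := by
  have hRu : HasFDerivAt (fun x => A x + B w - c) A u :=
    (A.hasFDerivAt.add_const _).sub_const _
  have hRv : HasFDerivAt (fun y => A u + B y - c) B v :=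
    (B.hasFDerivAt.const_add _).sub_const _
  have hfle := fenchelConjugate_le_of_isMinOn_augmentedLagrangian_of_strongConvexOn
    (A u + B v - c) hf hfstar hu hRu hτ hρ hη hγ humin
  have hhle := fenchelConjugate_le_of_isMinOn_augmentedLagrangian hh hhstar hv hRv hvmin
  rw [dualObjective, inner_sub_right _ (A u + B v) c, inner_add_right, real_inner_comm _ c]
  linarith

end Dual

/-- `b` plays the part of the Bregman distance `b(·, ū_c)`, and `vprev` is `v̂ᵏ`. -/
theorem stmt_14_general [CompleteSpace E₁] [CompleteSpace E₂] [CompleteSpace F]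
    {s : Set E₁} {t : Set E₂} {g b gstar gstarp : E₁ → ℝ} {h hstar : E₂ → ℝ}
    {A : E₁ →L[ℝ] F} {B : E₂ →L[ℝ] F} {c : F} {τ γ γp β βp ρ η D : ℝ}
    (hg : ConvexOn ℝ s g) (hh : ConvexOn ℝ t h) (hb : StrongConvexOn s 1 b)
    (hgstar : IsFenchelConjugateOn s (fun u => g u + γ * b u) gstar)
    (hgstarp : IsFenchelConjugateOn s (fun u => g u + γp * b u) gstarp)
    (hhstar : IsFenchelConjugateOn t h hstar)
    (hD : ∀ u ∈ s, ∀ v ∈ t, ‖A u + B v - c‖ ≤ D)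
    (hτ₀ : 0 < τ) (hτ₁ : τ < 1) (hβ : 0 < β) (hρ : 0 ≤ ρ) (hη : 0 ≤ η)
    (hηβ : 2 * τ ^ 2 ≤ (1 - τ) * (1 + 2 * τ) * η * β)
    (hγb : ∀ u ∈ s, (1 - τ) * (γ * b u) ≤ γp * b u)
    (hβp : (1 - τ) * β ≤ βp) (hγp : ‖A‖ ^ 2 * (η + ρ / τ) ≤ γp)
    {ubar uhat : E₁} {vbar vprev vhat : E₂} {lambar lamhat : F}
    (hubar : ubar ∈ s) (hvbar : vbar ∈ t) (hvprev : vprev ∈ t)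
    (hlamhat : lamhat = (1 - τ) • lambar + τ • β⁻¹ • (c - A ubar - B vbar))
    (huhat : uhat ∈ s)
    (huhat_min : IsMinOn (fun u => g u - ⟪A.adjoint lamhat, u⟫ + ρ / 2 * ‖A u + B vprev - c‖ ^ 2
      + γp * b u) s uhat)
    (hvhat : vhat ∈ t)
    (hvhat_min : IsMinOn (fun v => h v - ⟪B.adjoint lamhat, v⟫ + η / 2 * ‖A uhat + B v - c‖ ^ 2)
      t vhat) :
    penalizedObjective g h A B c βp ((1 - τ) • ubar + τ • uhat) ((1 - τ) • vbar + τ • vhat)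
        + dualObjective gstarp hstar A B c (lamhat - η • (A uhat + B vhat - c))
      ≤ (1 - τ) * (penalizedObjective g h A B c β ubar vbar
          + dualObjective gstar hstar A B c lambar)
        + (τ ^ 2 * η / 4 + τ * ρ / 2) * D ^ 2 := by
  have hτ : 0 < 1 - τ := sub_pos.2 hτ₁
  have hγp₀ : 0 ≤ γp := le_trans (by positivity) hγp
  have hgb : StrongConvexOn s γp (fun u => g u + γp * b u) := by
    simpa only [mul_one] using strongConvexOn_add_const_mul hg hb hγp₀
  have primal := penalizedObjective_convexCombination_le (A := A) (B := B) (c := c) hg hh hβ hβp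
    hτ₀.le hτ₁ hubar huhat hvbar hvhat
  have dual := dualObjective_le_of_isMinOn_augmentedLagrangian hgb hh hgstarp hhstar hτ₀ hρ hη hγp
    huhat (by simpa only [sub_eq_add_neg, add_right_comm] using huhat_min) hvhat hvhat_min
  have weak_duality := mul_le_mul_of_nonneg_left (inner_residual_sub_le_dualObjective
    (A := A) (B := B) (c := c) hgstar hhstar huhat hvhat lambar) hτ.le
  have multiplier : ⟪lamhat - η • (A uhat + B vhat - c), A uhat + B vhat - c⟫
      = (1 - τ) * ⟪lambar, A uhat + B vhat - c⟫
        + τ * ⟪β⁻¹ • (c - A ubar - B vbar), A uhat + B vhat - c⟫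
        - η * ‖A uhat + B vhat - c‖ ^ 2 := by
    rw [hlamhat, inner_sub_left, inner_add_left, real_inner_smul_left, real_inner_smul_left,
      real_inner_smul_left _ _ η, real_inner_self_eq_norm_sq]
  have smoothing := hγb uhat huhat
  have residual : (τ ^ 2 / (2 * ((1 - τ) * β)) - η / 2) * ‖A uhat + B vhat - c‖ ^ 2
      ≤ τ ^ 2 * η / 4 * D ^ 2 :=
    (mul_le_mul_of_nonneg_right (residual_coeff_le hτ₁ hβ hη hηβ) (sq_nonneg _)).trans <| by
      gcongr; exact hD uhat huhat vhat hvhat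
  have proximal : τ * ρ / 2 * ‖A uhat + B vprev - c‖ ^ 2 ≤ τ * ρ / 2 * D ^ 2 := by
    gcongr; exact hD uhat huhat vprev hvprev
  linarith

end Hilbert

theorem stmt_14 {p₁ p₂ n : ℕ}
    (g : EuclideanSpace ℝ (Fin p₁) → ℝ) (domg : Set (EuclideanSpace ℝ (Fin p₁)))
    (h : EuclideanSpace ℝ (Fin p₂) → ℝ) (domh : Set (EuclideanSpace ℝ (Fin p₂)))
    (A : EuclideanSpace ℝ (Fin p₁) →L[ℝ] EuclideanSpace ℝ (Fin n))
    (B : EuclideanSpace ℝ (Fin p₂) →L[ℝ] EuclideanSpace ℝ (Fin n))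
    (c : EuclideanSpace ℝ (Fin n))
    (hgconv : ConvexOn ℝ domg g) (hglsc : LowerSemicontinuousOn g domg)
    (hgne : domg.Nonempty)
    (hhconv : ConvexOn ℝ domh h) (hhlsc : LowerSemicontinuousOn h domh)
    (hhne : domh.Nonempty)
    (hstar : EuclideanSpace ℝ (Fin p₂) → ℝ)
    (hhstar : ∀ z, IsLUB ((fun v => ⟪z, v⟫ - h v) '' domh) (hstar z))
    (ω : EuclideanSpace ℝ (Fin p₁) → ℝ) (ω' : EuclideanSpace ℝ (Fin p₁) → EuclideanSpace ℝ (Fin p₁))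
    (hωgrad : ∀ x, HasGradientAt ω (ω' x) x)
    (hωsc : StrongConvexOn domg 1 ω)
    (Lb : ℝ) (hLb : 0 < Lb) (hωlip : LipschitzWith (Real.toNNReal Lb) ω')
    (uc : EuclideanSpace ℝ (Fin p₁)) (huc : uc ∈ domg)
    (gS : ℝ → EuclideanSpace ℝ (Fin p₁) → ℝ) (uS : ℝ → EuclideanSpace ℝ (Fin p₁) → EuclideanSpace ℝ (Fin p₁))
    (hgS : ∀ γ : ℝ, 0 < γ → ∀ z : EuclideanSpace ℝ (Fin p₁),
      uS γ z ∈ domg ∧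
      (∀ u ∈ domg, ⟪z, u⟫ - g u - γ * breg ω ω' u uc
        ≤ ⟪z, uS γ z⟫ - g (uS γ z) - γ * breg ω ω' (uS γ z) uc) ∧
      (∀ u ∈ domg, ⟪z, u⟫ - g u - γ * breg ω ω' u uc
        = ⟪z, uS γ z⟫ - g (uS γ z) - γ * breg ω ω' (uS γ z) uc → u = uS γ z) ∧
      gS γ z = ⟪z, uS γ z⟫ - g (uS γ z) - γ * breg ω ω' (uS γ z) uc)
    (dG : ℝ → EuclideanSpace ℝ (Fin n) → ℝ)
    (hdG : ∀ γ lam, dG γ lam = gS γ ((ContinuousLinearMap.adjoint A) lam) + hstar ((ContinuousLinearMap.adjoint B) lam) - ⟪c, lam⟫)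
    (G : ℝ → ℝ → EuclideanSpace ℝ (Fin p₁) → EuclideanSpace ℝ (Fin p₂) → EuclideanSpace ℝ (Fin n) → ℝ)
    (hGdef : ∀ γ β u v lam, G γ β u v lam
      = g u + h v + 1/(2*β) * ‖A u + B v - c‖^2 + dG γ lam)
    (Df : ℝ)
    (hDf : IsLUB {r : ℝ | ∃ u ∈ domg, ∃ v ∈ domh, r = ‖A u + B v - c‖} Df)
    (ubar : EuclideanSpace ℝ (Fin p₁)) (vbar : EuclideanSpace ℝ (Fin p₂)) (lambar : EuclideanSpace ℝ (Fin n)) (vhatk : EuclideanSpace ℝ (Fin p₂))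
    (hubar : ubar ∈ domg) (hvbar : vbar ∈ domh) (hvhatk : vhatk ∈ domh)
    (τ γ γp β βp ρ η : ℝ)
    (hτ : τ ∈ Set.Ioo (0:ℝ) 1)
    (hγ : 0 < γ) (hγp : 0 < γp) (hβ : 0 < β) (hβp : 0 < βp)
    (hρ : 0 < ρ) (hηpos : 0 < η)
    (hc1 : (1 - τ) * (1 + 2*τ) * η * β ≥ 2*τ^2)
    (hc2 : γp ≥ ((3 - 2*τ)/(3 - (2 - Lb⁻¹)*τ)) * γ)
    (hc3 : βp ≥ (1 - τ) * β)
    (hc4 : γp ≥ ‖A‖^2 * (η + ρ/τ))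
    (lamstark lamhat : EuclideanSpace ℝ (Fin n)) (uhat : EuclideanSpace ℝ (Fin p₁)) (vhat : EuclideanSpace ℝ (Fin p₂))
    (ubarp : EuclideanSpace ℝ (Fin p₁)) (vbarp : EuclideanSpace ℝ (Fin p₂)) (lambarp : EuclideanSpace ℝ (Fin n))
    (hlamstark : lamstark = β⁻¹ • (c - A ubar - B vbar))
    (hlamhat : lamhat = (1 - τ) • lambar + τ • lamstark)
    (huhat : uhat ∈ domg ∧ ∀ u ∈ domg,
      g uhat - ⟪(ContinuousLinearMap.adjoint A) lamhat, uhat⟫ + ρ/2 * ‖A uhat + B vhatk - c‖^2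
          + γp * breg ω ω' uhat uc
        ≤ g u - ⟪(ContinuousLinearMap.adjoint A) lamhat, u⟫ + ρ/2 * ‖A u + B vhatk - c‖^2
          + γp * breg ω ω' u uc)
    (hvhat : vhat ∈ domh ∧ ∀ v ∈ domh,
      h vhat - ⟪(ContinuousLinearMap.adjoint B) lamhat, vhat⟫ + η/2 * ‖A uhat + B vhat - c‖^2
        ≤ h v - ⟪(ContinuousLinearMap.adjoint B) lamhat, v⟫ + η/2 * ‖A uhat + B v - c‖^2)
    (hlambarp : lambarp = lamhat - η • (A uhat + B vhat - c))
    (hubarp : ubarp = (1 - τ) • ubar + τ • uhat)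
    (hvbarp : vbarp = (1 - τ) • vbar + τ • vhat) :
    G γp βp ubarp vbarp lambarp
      ≤ (1 - τ) * G γ β ubar vbar lambar + (τ^2*η/4 + τ*ρ/2) * Df^2 := by
  have smoothed (δ : ℝ) (hδ : 0 < δ) :
      IsFenchelConjugateOn domg (fun u => g u + δ * breg ω ω' u uc) (gS δ) :=
    isFenchelConjugateOn_of_forall_exists_eq fun z => by
      obtain ⟨hmem, hmax, -, hval⟩ := hgS δ hδ z
      exact ⟨uS δ z, hmem, by simpa only [sub_sub] using hmax, by rw [hval, sub_sub]⟩
  subst hlamstark hlambarp hubarp hvbarp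
  simp only [hGdef, hdG]
  exact stmt_14_general hgconv hhconv (strongConvexOn_breg hωsc) (smoothed γ hγ) (smoothed γp hγp)
    hhstar (fun u hu v hv => hDf.1 ⟨u, hu, v, hv, rfl⟩) hτ.1 hτ.2 hβ hρ.le hηpos.le hc1
    (fun u hu => one_sub_mul_breg_le hωsc (fun z _ => hωgrad z) hLb.le hωlip.lipschitzOnWith
      hτ.1.le hτ.2 hγ.le hc2 huc hu)
    hc3 hc4 hubar hvbar hvhatk hlamhat huhat.1 huhat.2 hvhat.1 hvhat.2
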